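/- arXiv:hep-th/0205144 — 3 statements merged into one kernel-verified Lean document; each statement's English description precedes it below -/
import Mathlib

section
/- Let n ≥ 2. Every element of M_n is a finite sum (with repetitions allowed) of elements of S_n; i.e. S_n generates the additive monoid M_n. Explicitly, every v ∈ M_n can be written as v_0 copies of e_0, plus a sum of v_1 vectors of the form e_1 + w, plus a sum of v_2 vectors of the form e_2 + w, where each w has entries in {0,1} and vanishes on coordinates 0, 1 and 2. -/
/-- The `m`-th standard basis vector `e_m` of `ℤ^(n+2)` (coordinates indexed by `ℕ`,
vanishing outside `{0,…,n+1}`). -/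
def e (m : ℕ) : ℕ → ℤ := fun j => if j = m then 1 else 0

/-- The pairing `v·k = ∑_{m=0}^{n+1} v_m k_m` on `ℤ^(n+2)`. -/
def dot (n : ℕ) (v k : ℕ → ℤ) : ℤ := ∑ m ∈ Finset.range (n + 2), v m * k m

/-- `M_n`: the lattice points of the dual cone, namely all `v ∈ ℤ^(n+2)` with
`v_m ≥ 0` for every coordinate `m` and `v_1 + v_2 ≥ v_{i+1}` for every `i ∈ {2,…,n}`. -/
def Mset (n : ℕ) : Set (ℕ → ℤ) :=
  {v | (∀ m, 0 ≤ v m) ∧ (∀ m, n + 1 < m → v m = 0) ∧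
       (∀ i, 2 ≤ i → i ≤ n → v (i + 1) ≤ v 1 + v 2)}

/-- A zero-one vector in `ℤ^(n+2)` vanishing on coordinates `0`, `1` and `2`. -/
def ZeroOne (n : ℕ) (w : ℕ → ℤ) : Prop :=
  (∀ m, w m = 0 ∨ w m = 1) ∧ w 0 = 0 ∧ w 1 = 0 ∧ w 2 = 0 ∧
    ∀ m, n + 1 < m → w m = 0

/-- The candidate generating set `S_n`: the vector `e_0`, together with the vectors
`e_1 + w` and `e_2 + w` where `w` ranges over zero-one vectors vanishing on
coordinates `0`, `1`, `2`. -/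
def Sset (n : ℕ) : Set (ℕ → ℤ) :=
  {v | v = e 0 ∨ ∃ w, ZeroOne n w ∧ (v = e 1 + w ∨ v = e 2 + w)}

/-- the zero-one support vector -/
def supp01 (v : ℕ → ℤ) : ℕ → ℤ := fun m => if 3 ≤ m ∧ 0 < v m then 1 else 0

lemma supp01_zeroOne (n : ℕ) (v : ℕ → ℤ) (hv : v ∈ Mset n) : ZeroOne n (supp01 v) := by
  refine ⟨?_, ?_, ?_, ?_, ?_⟩
  · intro m
    unfold supp01
    split_ifs <;> simp
  · simp [supp01]
  · simp [supp01]
  · simp [supp01]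
  · intro m hm
    simp [supp01, hv.2.1 m hm]

lemma strip_mem (n : ℕ) (v : ℕ → ℤ) (hv : v ∈ Mset n) (c : ℕ) (hc : c = 1 ∨ c = 2)
    (hpos : 0 < v c) (hn : 2 ≤ n) : v - (e c + supp01 v) ∈ Mset n := by
  obtain ⟨h0, h1, h2⟩ := hv
  refine ⟨?_, ?_, ?_⟩
  · intro m
    have := h0 m
    simp only [Pi.sub_apply, Pi.add_apply, e, supp01]
    by_cases hm : m = c
    · subst hm
      have : ¬ 3 ≤ m := by omega
      simp [this]
      omega
    · simp only [hm, if_false]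
      split_ifs <;> omega
  · intro m hm
    have hmc : m ≠ c := by omega
    simp [e, supp01, h1 m hm, hmc]
  · intro i hi hin
    have a := h2 i hi hin
    have b1 := h0 1
    have b2 := h0 2
    have b3 := h0 (i+1)
    simp only [Pi.sub_apply, Pi.add_apply, e, supp01]
    rcases hc with rfl | rfl <;> split_ifs <;> omega

lemma decomp (n : ℕ) (hn : 2 ≤ n) (k : ℕ) : ∀ v ∈ Mset n, v 1 + v 2 = k →
      ∃ L₁ L₂ : Multiset (ℕ → ℤ),
        (L₁.card : ℤ) = v 1 ∧ (L₂.card : ℤ) = v 2 ∧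
        (∀ u ∈ L₁, ∃ w, ZeroOne n w ∧ u = e 1 + w) ∧
        (∀ u ∈ L₂, ∃ w, ZeroOne n w ∧ u = e 2 + w) ∧
        v = (v 0).toNat • e 0 + L₁.sum + L₂.sum := by
  induction k with
  | zero =>
    intro v hv hk
    obtain ⟨h0, h1, h2⟩ := hv
    have a1 := h0 1
    have a2 := h0 2
    refine ⟨0, 0, by simp; omega, by simp; omega, by simp, by simp, ?_⟩
    funext m
    have b0 := h0 0
    have bm := h0 m
    rcases Nat.lt_or_ge m 3 with hm | hm
    · interval_cases m <;> simp [e] <;> omega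
    · have : v m = 0 := by
        rcases Nat.lt_or_ge (n+1) m with h | h
        · exact h1 m h
        · have := h2 (m-1) (by omega) (by omega)
          rw [show m - 1 + 1 = m by omega] at this
          omega
      have hm0 : m ≠ 0 := by omega
      simp [e, this, hm0]
  | succ k ih =>
    intro v hv hk
    have hz := supp01_zeroOne n v hv
    have a1 := hv.1 1
    have a2 := hv.1 2
    by_cases hp : 0 < v 1
    · have hm := strip_mem n v hv 1 (Or.inl rfl) hp hn
      obtain ⟨L₁, L₂, c1, c2, d1, d2, hs⟩ := ih _ hm (by
        simp [e, supp01]; push_cast at hk; omega)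
      refine ⟨(e 1 + supp01 v) ::ₘ L₁, L₂, ?_, ?_, ?_, d2, ?_⟩
      · simp [e, supp01] at c1 ⊢; omega
      · simp [e, supp01] at c2 ⊢; omega
      · intro u hu
        rcases Multiset.mem_cons.1 hu with rfl | hu
        · exact ⟨_, hz, rfl⟩
        · exact d1 u hu
      · have h00 : (v - (e 1 + supp01 v)) 0 = v 0 := by simp [e, supp01]
        rw [h00, sub_eq_iff_eq_add] at hs
        rw [Multiset.sum_cons]
        refine hs.trans ?_
        abel
    · have hp : 0 < v 2 := by push_cast at hk; omega
      have hm := strip_mem n v hv 2 (Or.inr rfl) hp hn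
      obtain ⟨L₁, L₂, c1, c2, d1, d2, hs⟩ := ih _ hm (by
        simp [e, supp01]; push_cast at hk; omega)
      refine ⟨L₁, (e 2 + supp01 v) ::ₘ L₂, ?_, ?_, d1, ?_, ?_⟩
      · simp [e, supp01] at c1 ⊢; omega
      · simp [e, supp01] at c2 ⊢; omega
      · intro u hu
        rcases Multiset.mem_cons.1 hu with rfl | hu
        · exact ⟨_, hz, rfl⟩
        · exact d2 u hu
      · have h00 : (v - (e 2 + supp01 v)) 0 = v 0 := by simp [e, supp01]
        rw [h00, sub_eq_iff_eq_add] at hs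
        rw [Multiset.sum_cons]
        refine hs.trans ?_
        abel

/-- `S_n` generates the additive monoid `M_n`: every `v ∈ M_n` is a finite
sum of elements of `S_n`; explicitly, `v` is `v_0` copies of `e_0`, plus a sum of `v_1`
vectors of the form `e_1 + w`, plus a sum of `v_2` vectors of the form `e_2 + w`. -/
theorem statement2 (n : ℕ) (hn : 2 ≤ n) :
    ∀ v ∈ Mset n,
      v ∈ AddSubmonoid.closure (Sset n) ∧
      ∃ L₁ L₂ : Multiset (ℕ → ℤ),
        (L₁.card : ℤ) = v 1 ∧ (L₂.card : ℤ) = v 2 ∧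
        (∀ u ∈ L₁, ∃ w, ZeroOne n w ∧ u = e 1 + w) ∧
        (∀ u ∈ L₂, ∃ w, ZeroOne n w ∧ u = e 2 + w) ∧
        v = (v 0).toNat • e 0 + L₁.sum + L₂.sum := by
  intro v hv
  have a1 := hv.1 1
  have a2 := hv.1 2
  have h := decomp n hn (v 1 + v 2).toNat v hv (by omega)
  refine ⟨?_, h⟩
  obtain ⟨L₁, L₂, -, -, d1, d2, hs⟩ := h
  rw [hs]
  refine add_mem (add_mem (nsmul_mem (AddSubmonoid.subset_closure (show e 0 ∈ Sset n from Or.inl rfl)) _) ?_) ?_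
  · refine AddSubmonoid.multiset_sum_mem _ _ fun u hu => AddSubmonoid.subset_closure ?_
    obtain ⟨w, hw, rfl⟩ := d1 u hu
    exact Or.inr ⟨w, hw, Or.inl rfl⟩
  · refine AddSubmonoid.multiset_sum_mem _ _ fun u hu => AddSubmonoid.subset_closure ?_
    obtain ⟨w, hw, rfl⟩ := d2 u hu
    exact Or.inr ⟨w, hw, Or.inr rfl⟩
end

section
/- Let n ≥ 2. Every element s of S_n is irreducible in the monoid M_n: s ≠ 0, and whenever s = a + b with a, b ∈ M_n, either a = 0 or b = 0. -/
theorem Mset_zero (n : ℕ) (v : ℕ → ℤ) (hv : v ∈ Mset n) (h0 : v 0 = 0) (h1 : v 1 = 0)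
    (h2 : v 2 = 0) : v = 0 := by
  obtain ⟨hp, ho, hc⟩ := hv
  funext m
  show v m = 0
  by_cases hm : n + 1 < m
  · exact ho m hm
  · match m, hm with
    | 0, _ => exact h0
    | 1, _ => exact h1
    | 2, _ => exact h2
    | k + 3, hm =>
      have a := hc (k + 2) (by omega) (by omega)
      have b := hp (k + 3)
      have c : v (k + 2 + 1) = v (k + 3) := rfl
      omega

theorem irr_aux (n : ℕ) (s : ℕ → ℤ) (h12 : s 0 + s 1 + s 2 = 1) :
    s ≠ 0 ∧ ∀ a ∈ Mset n, ∀ b ∈ Mset n, s = a + b → a = 0 ∨ b = 0 := by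
  constructor
  · rintro rfl
    simp at h12
  · intro a ha b hb h
    have e0 : s 0 = a 0 + b 0 := by rw [h]; rfl
    have e1 : s 1 = a 1 + b 1 := by rw [h]; rfl
    have e2 : s 2 = a 2 + b 2 := by rw [h]; rfl
    have a0 := ha.1 0
    have a1 := ha.1 1
    have a2 := ha.1 2
    have b0 := hb.1 0
    have b1 := hb.1 1
    have b2 := hb.1 2
    by_cases hs : a 0 + a 1 + a 2 = 0
    · exact Or.inl (Mset_zero n a ha (by omega) (by omega) (by omega))
    · exact Or.inr (Mset_zero n b hb (by omega) (by omega) (by omega))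

/-- every element `s` of `S_n` is irreducible in the monoid `M_n`:
`s ≠ 0`, and whenever `s = a + b` with `a, b ∈ M_n`, either `a = 0` or `b = 0`. -/
theorem statement3 (n : ℕ) (hn : 2 ≤ n) :
    ∀ s ∈ Sset n, s ≠ 0 ∧
      ∀ a ∈ Mset n, ∀ b ∈ Mset n, s = a + b → a = 0 ∨ b = 0 := by
  intro s hs
  apply irr_aux
  rcases hs with rfl | ⟨w, ⟨_, w0, w1, w2, _⟩, rfl | rfl⟩
  · simp [e]
  · simp [e, w0, w1, w2]
  · simp [e, w0, w1, w2]
end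

section
/- Let n ≥ 2. The minimal cardinality of a generating set of the additive monoid M_n is exactly 2^n + 1: the set S_n generates M_n and has 2^n + 1 elements, while no subset of M_n of cardinality strictly less than 2^n + 1 generates M_n. In particular, the number of linear sigma-model fields in the GLSM description of the A_{n−1} singularity ℂ²/ℤ_n is 2^n + 1. -/
theorem S_sub (n : ℕ) (h2n : 2 ≤ n) : Sset n ⊆ Mset n := by
  rintro v (rfl | ⟨w, ⟨h01, h0, h1, h2, hn⟩, rfl | rfl⟩)
  · refine ⟨fun m => ?_, fun m hm => ?_, fun i hi _ => ?_⟩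
    · simp only [e]; split_ifs <;> simp
    · simp only [e]; rw [if_neg (by omega)]
    · simp [e]
  · refine ⟨fun m => ?_, fun m hm => ?_, fun i hi _ => ?_⟩
    · have := h01 m
      simp only [e, Pi.add_apply]; split_ifs <;> omega
    · have := hn m hm
      simp only [e, Pi.add_apply]; rw [if_neg (by omega)]; omega
    · have := h01 (i+1)
      simp only [e, Pi.add_apply, h1, h2]; split_ifs <;> omega
  · refine ⟨fun m => ?_, fun m hm => ?_, fun i hi _ => ?_⟩
    · have := h01 m
      simp only [e, Pi.add_apply]; split_ifs <;> omega
    · have := hn m hm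
      simp only [e, Pi.add_apply]; rw [if_neg (by omega)]; omega
    · have := h01 (i+1)
      simp only [e, Pi.add_apply, h1, h2]; split_ifs <;> omega

theorem M_zero {n : ℕ} {v : ℕ → ℤ} (hv : v ∈ Mset n) (h1 : v 1 = 0) (h2 : v 2 = 0) (m : ℕ)
    (hm : m ≠ 0) : v m = 0 := by
  obtain ⟨a, b, c⟩ := hv
  rcases (by omega : m = 1 ∨ m = 2 ∨ 3 ≤ m) with rfl | rfl | h
  · exact h1
  · exact h2
  · by_cases hmn : n + 1 < m
    · exact b m hmn
    · have := c (m - 1) (by omega) (by omega)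
      have h3 := a m
      rw [show m - 1 + 1 = m by omega] at this
      omega

theorem gen (n : ℕ) (h2n : 2 ≤ n) (k : ℕ) : ∀ v ∈ Mset n, v 1 + v 2 = k →
    v ∈ AddSubmonoid.closure (Sset n) := by
  induction k with
  | zero =>
    intro v hv h
    have n1 := hv.1 1
    have n2 := hv.1 2
    have n0 := hv.1 0
    have hz := M_zero hv (by push_cast at h; omega) (by push_cast at h; omega)
    have : v = (v 0).toNat • e 0 := by
      funext m
      by_cases hm : m = 0
      · subst hm; simp [e, n0]
      · simp [e, hm, hz m hm]
    rw [this]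
    have h0 : e 0 ∈ Sset n := Or.inl rfl
    exact nsmul_mem (AddSubmonoid.subset_closure h0) _
  | succ k ih =>
    intro v hv h
    have hv' := hv
    obtain ⟨a, b, c⟩ := hv
    let w : ℕ → ℤ := fun m => if 3 ≤ m ∧ 0 < v m then 1 else 0
    have hw : ZeroOne n w := by
      refine ⟨fun m => ?_, by simp [w], by simp [w], by simp [w], fun m hm => ?_⟩
      · simp only [w]; split_ifs <;> simp
      · simp [w, b m hm]
    have key : ∀ j, (j = 1 ∨ j = 2) → 0 < v j → v ∈ AddSubmonoid.closure (Sset n) := by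
      intro j hj hpos
      have hs : e j + w ∈ Sset n := by
        refine Or.inr ⟨w, hw, ?_⟩
        rcases hj with rfl | rfl <;> simp
      have hsum : (v - (e j + w)) 1 + (v - (e j + w)) 2 = k := by
        push_cast at h
        rcases hj with rfl | rfl <;> simp [e, w] <;> omega
      have hm : v - (e j + w) ∈ Mset n := by
        refine ⟨fun m => ?_, fun m hm => ?_, fun i hi hin => ?_⟩
        · have := a m
          simp only [Pi.sub_apply, Pi.add_apply, e, w]
          by_cases hmj : m = j
          · subst hmj
            rw [if_pos rfl, if_neg (by omega)]; omega
          · rw [if_neg hmj]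
            split_ifs <;> omega
        · have := b m hm
          simp only [Pi.sub_apply, Pi.add_apply, e, w]
          split_ifs <;> omega
        · rw [hsum]
          have h1 := c i hi hin
          have h2 := a (i+1)
          simp only [Pi.sub_apply, Pi.add_apply, e, w]
          rw [if_neg (by omega)]
          push_cast at h
          split_ifs <;> omega
      have := AddSubmonoid.add_mem _ (ih _ hm hsum) (AddSubmonoid.subset_closure hs)
      simpa using this
    have n1 := a 1
    have n2 := a 2
    push_cast at h
    by_cases h1 : 0 < v 1
    · exact key 1 (Or.inl rfl) h1
    · exact key 2 (Or.inr rfl) (by omega)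

theorem S_f {n : ℕ} {v : ℕ → ℤ} (hv : v ∈ Sset n) : v 0 + v 1 + v 2 = 1 := by
  rcases hv with rfl | ⟨w, ⟨h01, h0, h1, h2, hn⟩, rfl | rfl⟩ <;> simp [e, *]

theorem lower (n : ℕ) (h2n : 2 ≤ n) (G : Set (ℕ → ℤ)) (hG : G ⊆ Mset n)
    (h : ∀ v ∈ Mset n, v ∈ AddSubmonoid.closure G) : Sset n ⊆ G := by
  intro s hs
  have key : ∀ v ∈ AddSubmonoid.closure G, v ∈ Mset n ∧ (v ∈ Sset n → v ∈ G) := by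
    intro v hv
    induction hv using AddSubmonoid.closure_induction with
    | mem x hx => exact ⟨hG hx, fun _ => hx⟩
    | zero =>
      refine ⟨⟨by simp, by simp, by simp⟩, fun h => ?_⟩
      have := S_f h
      simp at this
    | add x y _ _ hx hy =>
      obtain ⟨hx, hx'⟩ := hx
      obtain ⟨hy, hy'⟩ := hy
      refine ⟨⟨fun m => add_nonneg (hx.1 m) (hy.1 m), fun m hm => ?_, fun i hi hin => ?_⟩, ?_⟩
      · simp [hx.2.1 m hm, hy.2.1 m hm]
      · have := hx.2.2 i hi hin
        have := hy.2.2 i hi hin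
        simp only [Pi.add_apply]; omega
      · intro hS
        have hf := S_f hS
        simp only [Pi.add_apply] at hf
        have a0 := hx.1 0
        have a1 := hx.1 1
        have a2 := hx.1 2
        have b0 := hy.1 0
        have b1 := hy.1 1
        have b2 := hy.1 2
        have z : ∀ u ∈ Mset n, u 0 = 0 → u 1 = 0 → u 2 = 0 → u = 0 := by
          intro u hu h0 h1 h2
          funext m
          by_cases hm : m = 0
          · subst hm; exact h0
          · exact M_zero hu h1 h2 m hm
        rcases (by omega : (x 0 + x 1 + x 2 = 0) ∨ (y 0 + y 1 + y 2 = 0)) with h | h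
        · have := z x hx (by omega) (by omega) (by omega)
          subst this
          simp only [zero_add] at hS ⊢
          exact hy' hS
        · have := z y hy (by omega) (by omega) (by omega)
          subst this
          simp only [add_zero] at hS ⊢
          exact hx' hS
  exact (key s (h s (S_sub n h2n hs))).2 hs

/-- indicator vector -/
def indv (T : Finset ℕ) : ℕ → ℤ := fun m => if m ∈ T then 1 else 0

theorem indv_inj : Function.Injective indv := by
  intro S T h
  ext m
  have := congrFun h m
  simp only [indv] at this
  by_cases h1 : m ∈ S <;> by_cases h2 : m ∈ T <;> simp_all

theorem zo_iff (n : ℕ) (w : ℕ → ℤ) :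
    ZeroOne n w ↔ ∃ T ∈ (Finset.Icc 3 (n+1)).powerset, indv T = w := by
  constructor
  · rintro ⟨h01, h0, h1, h2, hn⟩
    refine ⟨(Finset.Icc 3 (n+1)).filter (fun m => w m = 1), by simp, ?_⟩
    funext m
    simp only [indv, Finset.mem_filter, Finset.mem_Icc]
    split_ifs with h
    · exact h.2.symm
    · rcases h01 m with h' | h'
      · exact h'.symm
      · exfalso
        apply h
        refine ⟨⟨?_, ?_⟩, h'⟩
        · by_contra hc
          rcases (by omega : m = 0 ∨ m = 1 ∨ m = 2) with rfl | rfl | rfl <;> omega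
        · by_contra hc
          have := hn m (by omega)
          omega
  · rintro ⟨T, hT, rfl⟩
    have hT : ∀ m ∈ T, 3 ≤ m ∧ m ≤ n + 1 := fun m hm =>
      Finset.mem_Icc.1 (Finset.mem_powerset.1 hT hm)
    have z : ∀ m, (m < 3 ∨ n + 1 < m) → indv T m = 0 := by
      intro m hm
      simp only [indv]
      rw [if_neg]
      intro hc
      have := hT m hc
      omega
    refine ⟨fun m => ?_, z _ (by omega), z _ (by omega), z _ (by omega), fun m hm => z _ (by omega)⟩
    simp only [indv]; split_ifs <;> simp

theorem card_S (n : ℕ) (hn : 2 ≤ n) : (Sset n).encard = 2 ^ n + 1 := by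
  have hZ : {w | ZeroOne n w}.encard = 2 ^ (n - 1) := by
    have : {w | ZeroOne n w} = indv '' ((Finset.Icc 3 (n+1)).powerset : Set (Finset ℕ)) := by
      ext w
      exact zo_iff n w
    rw [this, indv_inj.encard_image, Set.encard_coe_eq_coe_finsetCard, Finset.card_powerset,
      Nat.card_Icc, show n + 1 + 1 - 3 = n - 1 by omega]
    push_cast
    rfl
  have hS : Sset n = insert (e 0) (((e 1 + ·) '' {w | ZeroOne n w}) ∪
      ((e 2 + ·) '' {w | ZeroOne n w})) := by
    ext v
    constructor
    · rintro (h | ⟨w, hw, h | h⟩)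
      · exact Or.inl h
      · exact Or.inr (Or.inl ⟨w, hw, h.symm⟩)
      · exact Or.inr (Or.inr ⟨w, hw, h.symm⟩)
    · rintro (h | ⟨w, hw, h⟩ | ⟨w, hw, h⟩)
      · exact Or.inl h
      · exact Or.inr ⟨w, hw, Or.inl h.symm⟩
      · exact Or.inr ⟨w, hw, Or.inr h.symm⟩
  rw [hS, Set.encard_insert_of_notMem, Set.encard_union_eq, (add_right_injective _).encard_image,
    (add_right_injective _).encard_image, hZ]
  · rw [← two_mul, ← pow_succ', show n - 1 + 1 = n by omega]
  · rw [Set.disjoint_left]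
    rintro _ ⟨w, hw, rfl⟩ ⟨u, hu, h⟩
    have := congrFun h 1
    simp [e, hw.2.2.1, hu.2.2.1] at this
  · rintro (⟨w, hw, h⟩ | ⟨w, hw, h⟩)
    · have := congrFun h 0
      simp [e, hw.2.1] at this
    · have := congrFun h 0
      simp [e, hw.2.1] at this

/-- the minimal cardinality of a generating set of the additive monoid `M_n`
is exactly `2^n + 1`: the set `S_n ⊆ M_n` generates `M_n` and has `2^n + 1` elements,
while any generating subset `G ⊆ M_n` has at least `2^n + 1` elements. In particular the
number of linear sigma-model fields in the GLSM description of `ℂ²/ℤ_n` is `2^n + 1`. -/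
theorem statement6 (n : ℕ) (hn : 2 ≤ n) :
    Sset n ⊆ Mset n ∧
    (∀ v ∈ Mset n, v ∈ AddSubmonoid.closure (Sset n)) ∧
    (Sset n).encard = 2 ^ n + 1 ∧
    ∀ G ⊆ Mset n, (∀ v ∈ Mset n, v ∈ AddSubmonoid.closure G) →
      (2 ^ n + 1 : ℕ∞) ≤ G.encard := by
  refine ⟨S_sub n hn, fun v hv => ?_, card_S n hn, fun G hG h => ?_⟩
  · have n1 := hv.1 1
    have n2 := hv.1 2
    exact gen n hn (v 1 + v 2).toNat v hv (by omega)
  · rw [← card_S n hn]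
    exact Set.encard_le_encard (lower n hn G hG h)
end
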